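/- q-moments of the height function through q-correlation observables. Let q ∈ ℂ with q ≠ 0 and q^j ≠ 1 for 1 ≤ j ≤ ℓ. Then for every n ≥ 0, every signature ν ∈ Sign⁺_n, every integer x ≥ 1 and every ℓ ≥ 0: q^{ℓ·h_ν(x)} = Σ_{k=0}^{ℓ} (−q)^{−k} · binom(ℓ, k)_q · (q; q)_k · Σ_{𝔪} 𝓔_𝔪(ν; q), where binom(ℓ,k)_q := (q;q)_ℓ/((q;q)_k (q;q)_{ℓ−k}) is the q-binomial coefficient, and the inner sum runs over all signatures 𝔪 = (𝔪_1 ≥ … ≥ 𝔪_k) with 𝔪_k ≥ x (only the finitely many 𝔪 with 𝔪_1 ≤ ν_1 contribute, since 𝓔_𝔪(ν;q) = 0 otherwise). -/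

import Mathlib

noncomputable section

open Finset
open scoped Classical

/-- The `q`-Pochhammer symbol `(a; q)_m`. -/
def qp (a q : ℂ) (m : ℕ) : ℂ := ∏ i ∈ Finset.range m, (1 - a * q ^ i)

/-- The height function `h_ν(x) = #{j : ν_j ≥ x}` of a signature. -/
def htAt {N : ℕ} (ν : Fin N → ℕ) (x : ℕ) : ℕ := (Finset.univ.filter fun i => x ≤ ν i).card

/-- The `q`-correlation observable
`𝓔_𝔪(ν; q) = Σ_{I = {i₁<…<i_k} : ν_{i_p} = 𝔪_p} q^{i₁+…+i_k}` (`1`-based indices);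
for `k = 0` it equals `1`. -/
def corrObs (q : ℂ) {n k : ℕ} (ν : Fin n → ℕ) (m : Fin k → ℕ) : ℂ :=
  ∑ ι : Fin k → Fin n,
    if StrictMono ι ∧ ∀ p, ν (ι p) = m p then q ^ (∑ p : Fin k, ((ι p : ℕ) + 1)) else 0

/-!
Write `h = h_ν(x)`. The indices `j` with `ν_j ≥ x` are `1, …, h`, so summing `𝓔_𝔪(ν; q)` over all
signatures `𝔪` of length `k` with parts `≥ x` gives the elementary symmetric polynomial
`e_k(q, …, q^h)`. For every `u` one has
`u^h = Σ_k (−q)^{−k} (u; q⁻¹)_k e_k(q, …, q^h)`,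
because by the recurrence of `e_k` in `h` the right-hand side `F_h(u)` satisfies
`F_{h+1}(u) = F_h(u) − q^h (1 − u) F_h(u / q)`. The theorem is the case `u = q^ℓ`, where
`(u; q⁻¹)_k = (q; q)_ℓ / (q; q)_{ℓ−k}` for `k ≤ ℓ` and `(u; q⁻¹)_k = 0` for `k > ℓ`.
-/

theorem map_valEmbedding_eq_range_card {n : ℕ} {s : Finset (Fin n)}
    (hs : IsLowerSet (s : Set (Fin n))) : s.map Fin.valEmbedding = range #s := by
  refine eq_of_subset_of_card_le (fun a ha => ?_) (by simp)
  obtain ⟨i, hi, rfl⟩ := mem_map.mp ha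
  have hsub : Iic i ⊆ s := fun j hj => hs (mem_Iic.mp hj) hi
  simpa [Nat.succ_le_iff] using card_le_card hsub

theorem sum_strictMono_prod_eq_sum_powersetCard {α R : Type*} [LinearOrder α] [Fintype α]
    [CommSemiring R] (t : Finset α) (k : ℕ) (f : α → R) :
    ∑ ι : Fin k → α with StrictMono ι ∧ ∀ p, ι p ∈ t, ∏ p, f (ι p) =
      ∑ s ∈ t.powersetCard k, ∏ a ∈ s, f a := by
  have card_image {ι : Fin k → α} (hι : StrictMono ι) : #(univ.image ι) = k := by
    rw [card_image_of_injective _ hι.injective, card_fin]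
  refine sum_bij' (fun ι _ => univ.image ι)
    (fun s hs => s.orderEmbOfFin (mem_powersetCard.mp hs).2) ?_ ?_ ?_ ?_ ?_
  · intro ι hι
    obtain ⟨hmono, hmem⟩ := (mem_filter.mp hι).2
    exact mem_powersetCard.mpr ⟨image_subset_iff.mpr fun p _ => hmem p, card_image hmono⟩
  · intro s hs
    obtain ⟨hsub, hcard⟩ := mem_powersetCard.mp hs
    exact mem_filter.mpr ⟨mem_univ _, (s.orderEmbOfFin hcard).strictMono,
      fun p => hsub (s.orderEmbOfFin_mem hcard p)⟩
  · intro ι hι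
    have hmono := (mem_filter.mp hι).2.1
    exact (orderEmbOfFin_unique (card_image hmono)
      (fun p => mem_image_of_mem ι (mem_univ p)) hmono).symm
  · exact fun s hs => s.image_orderEmbOfFin_univ (mem_powersetCard.mp hs).2
  · intro ι hι
    exact (prod_image (mem_filter.mp hι).2.1.injective.injOn).symm

theorem hasSum_corrObs (q : ℂ) {n : ℕ} {ν : Fin n → ℕ} (hν : Antitone ν) (x k : ℕ) :
    HasSum (fun m : {f : Fin k → ℕ // Antitone f ∧ ∀ i, x ≤ f i} => corrObs q ν m.val)
      (∑ ι : Fin k → Fin n with StrictMono ι ∧ ∀ p, x ≤ ν (ι p), ∏ p, q ^ ((ι p : ℕ) + 1)) := by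
  rw [sum_filter]
  refine hasSum_sum fun ι _ => ?_
  rw [← prod_pow_eq_pow_sum]
  by_cases hι : StrictMono ι ∧ ∀ p, x ≤ ν (ι p)
  · let m₀ : {f : Fin k → ℕ // Antitone f ∧ ∀ i, x ≤ f i} :=
      ⟨ν ∘ ι, hν.comp_monotone hι.1.monotone, hι.2⟩
    have eq_m₀_iff (m) : m = m₀ ↔ StrictMono ι ∧ ∀ p, ν (ι p) = m.val p := by
      simp [m₀, hι.1, Subtype.ext_iff, funext_iff, eq_comm]
    simp only [← eq_m₀_iff, if_pos hι]
    exact hasSum_ite_eq m₀ _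
  · have not_parts (m : {f : Fin k → ℕ // Antitone f ∧ ∀ i, x ≤ f i}) :
        ¬(StrictMono ι ∧ ∀ p, ν (ι p) = m.val p) :=
      fun h => hι ⟨h.1, fun p => (h.2 p).symm ▸ m.2.2 p⟩
    simp only [not_parts, hι, if_false]
    exact hasSum_zero

theorem tsum_corrObs_eq_sum_powersetCard (q : ℂ) {n : ℕ} {ν : Fin n → ℕ} (hν : Antitone ν)
    (x k : ℕ) :
    ∑' m : {f : Fin k → ℕ // Antitone f ∧ ∀ i, x ≤ f i}, corrObs q ν m.val =
      ∑ s ∈ (range (htAt ν x)).powersetCard k, ∏ i ∈ s, q ^ (i + 1) := by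
  have hlower : IsLowerSet ((univ.filter fun i => x ≤ ν i : Finset (Fin n)) : Set (Fin n)) :=
    fun i j hji hi => by simpa using (by simpa using hi : x ≤ ν i).trans (hν hji)
  have hsum := sum_strictMono_prod_eq_sum_powersetCard (univ.filter fun i => x ≤ ν i) k
    fun i : Fin n => q ^ ((i : ℕ) + 1)
  simp only [mem_filter_univ] at hsum
  rw [(hasSum_corrObs q hν x k).tsum_eq, hsum, htAt, ← map_valEmbedding_eq_range_card hlower,
    powersetCard_map, sum_map]
  simp [mapEmbedding_apply]

theorem sum_powerset_range_pochhammer_mul_prod_pow {K : Type*} [Field K] {q : K} (hq : q ≠ 0)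
    (u : K) (h : ℕ) :
    ∑ s ∈ (range h).powerset,
      (-q)⁻¹ ^ #s * (∏ i ∈ range #s, (1 - u * q⁻¹ ^ i)) * ∏ i ∈ s, q ^ (i + 1) = u ^ h := by
  induction h generalizing u with
  | zero => simp
  | succ h ih =>
    have insert_term (s) (hs : s ∈ (range h).powerset) :
        (-q)⁻¹ ^ #(insert h s) * (∏ i ∈ range #(insert h s), (1 - u * q⁻¹ ^ i)) *
            ∏ i ∈ insert h s, q ^ (i + 1) =
          -(q ^ h * (1 - u)) * ((-q)⁻¹ ^ #s *
            (∏ i ∈ range #s, (1 - u * q⁻¹ * q⁻¹ ^ i)) * ∏ i ∈ s, q ^ (i + 1)) := by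
      have hmem : h ∉ s := fun hmem => notMem_range_self (mem_powerset.mp hs hmem)
      rw [card_insert_of_notMem hmem, prod_insert hmem, prod_range_succ']
      simp only [pow_succ', ← mul_assoc, pow_zero, mul_one]
      field_simp
    rw [range_add_one, sum_powerset_insert notMem_range_self, ih, sum_congr rfl insert_term,
      ← mul_sum, ih, mul_pow, inv_pow]
    field_simp
    ring

theorem qp_self_ne_zero {q : ℂ} {m : ℕ} (hq : ∀ j : ℕ, 1 ≤ j → j ≤ m → q ^ j ≠ 1) :
    qp q q m ≠ 0 :=
  prod_ne_zero_iff.mpr fun i hi => by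
    rw [← pow_succ', sub_ne_zero]
    exact (hq (i + 1) i.succ_pos (mem_range.mp hi)).symm

theorem qp_pow_inv_eq_zero {q : ℂ} (hq : q ≠ 0) {ℓ k : ℕ} (hk : ℓ < k) :
    qp (q ^ ℓ) q⁻¹ k = 0 :=
  prod_eq_zero (mem_range.mpr hk) (by rw [inv_pow, mul_inv_cancel₀ (pow_ne_zero ℓ hq), sub_self])

theorem qp_pow_inv_mul_qp {q : ℂ} (hq : q ≠ 0) {ℓ k : ℕ} (hk : k ≤ ℓ) :
    qp (q ^ ℓ) q⁻¹ k * qp q q (ℓ - k) = qp q q ℓ := by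
  induction k with
  | zero => simp [qp]
  | succ k ih =>
    have factor : 1 - q ^ ℓ * q⁻¹ ^ k = 1 - q * q ^ (ℓ - (k + 1)) := by
      rw [inv_pow, ← pow_sub₀ q hq (by lia), ← pow_succ', show ℓ - (k + 1) + 1 = ℓ - k by lia]
    rw [← ih (by lia), show ℓ - k = ℓ - (k + 1) + 1 by lia]
    simp only [qp, prod_range_succ, factor]
    ring

theorem qBinomial_mul_qp_eq_qp_pow_inv {q : ℂ} (hq0 : q ≠ 0) {ℓ k : ℕ}
    (hq : ∀ j : ℕ, 1 ≤ j → j ≤ ℓ → q ^ j ≠ 1) (hk : k ≤ ℓ) :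
    qp q q ℓ / (qp q q k * qp q q (ℓ - k)) * qp q q k = qp (q ^ ℓ) q⁻¹ k := by
  have hk_ne : qp q q k ≠ 0 := qp_self_ne_zero fun j hj hjk => hq j hj (by lia)
  have hsub_ne : qp q q (ℓ - k) ≠ 0 := qp_self_ne_zero fun j hj hjk => hq j hj (by lia)
  rw [← qp_pow_inv_mul_qp hq0 hk]
  field_simp

theorem statement16_general {q : ℂ} (hq : q ≠ 0) (u : ℂ) {n : ℕ} {ν : Fin n → ℕ}
    (hν : Antitone ν) (x : ℕ) :
    HasSum (fun k : ℕ => (-q) ^ (-(k : ℤ)) * qp u q⁻¹ k *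
        ∑' m : {f : Fin k → ℕ // Antitone f ∧ ∀ i, x ≤ f i}, corrObs q ν m.val)
      (u ^ htAt ν x) := by
  simp only [tsum_corrObs_eq_sum_powersetCard q hν, zpow_neg, zpow_natCast, ← inv_pow]
  rw [← sum_powerset_range_pochhammer_mul_prod_pow hq u, sum_powerset, card_range]
  have sum_card_eq (k : ℕ) :
      ∑ s ∈ (range (htAt ν x)).powersetCard k,
          (-q)⁻¹ ^ #s * (∏ i ∈ range #s, (1 - u * q⁻¹ ^ i)) * ∏ i ∈ s, q ^ (i + 1) =
        (-q)⁻¹ ^ k * qp u q⁻¹ k *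
          ∑ s ∈ (range (htAt ν x)).powersetCard k, ∏ i ∈ s, q ^ (i + 1) := by
    rw [mul_sum]
    exact sum_congr rfl fun s hs => by rw [(mem_powersetCard.mp hs).2, qp]
  simp only [sum_card_eq]
  refine hasSum_sum_of_ne_finset_zero fun k hk => ?_
  rw [powersetCard_eq_empty.mpr (by simpa using hk), sum_empty, mul_zero]

/-- **`q`-moments of the height function through `q`-correlation observables**:
`q^{ℓ·h_ν(x)} = Σ_{k=0}^{ℓ} (−q)^{−k} binom(ℓ,k)_q (q;q)_k Σ_{𝔪₁ ≥ … ≥ 𝔪_k ≥ x} 𝓔_𝔪(ν; q)`,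
where the inner sum (over signatures `𝔪 ∈ Sign⁺_k` with all parts `≥ x`) has finitely many
nonzero terms. -/
theorem statement16 (q : ℂ) (hq0 : q ≠ 0) (ℓ : ℕ)
    (hq : ∀ j : ℕ, 1 ≤ j → j ≤ ℓ → q ^ j ≠ 1)
    (n : ℕ) (ν : Fin n → ℕ) (hν : Antitone ν) (x : ℕ) (hx : 1 ≤ x) :
    q ^ (ℓ * htAt ν x) =
      ∑ k ∈ Finset.range (ℓ + 1),
        (-q) ^ (-(k : ℤ)) * (qp q q ℓ / (qp q q k * qp q q (ℓ - k))) * qp q q k *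
          ∑' m : {f : Fin k → ℕ // Antitone f ∧ ∀ i, x ≤ f i}, corrObs q ν m.val := by
  rw [pow_mul, ← (statement16_general hq0 (q ^ ℓ) hν x).tsum_eq,
    tsum_eq_sum (s := range (ℓ + 1)) fun k hk => by
      rw [qp_pow_inv_eq_zero hq0 (by simpa [Nat.succ_le_iff] using hk), mul_zero, zero_mul]]
  exact sum_congr rfl fun k hk => by
    rw [← qBinomial_mul_qp_eq_qp_pow_inv hq0 hq (Nat.lt_succ_iff.mp (mem_range.mp hk)),
      ← mul_assoc ((-q) ^ _)]

end
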